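/- Let Ω ⊆ ℝ² be open, let γ : ℝ → ℝ be continuously differentiable, and let u, v, ψ, η : Ω → ℝ be twice continuously differentiable. Suppose that on Ω: ψ_x = u·η_x − v·η_y, ψ_y = u·η_y + v·η_x, u_x + v_y = −γ(ψ)·η_x, and u_y − v_x = −γ(ψ)·η_y. Then v satisfies the linear elliptic equation Δv + γ'(ψ)·(η_x² + η_y²)·v = 0 on Ω, where Δv = v_xx + v_yy. -/

import Mathlib

/-!
Differentiate the divergence equation in `y` and the curl equation in `x`, and subtract. The mixed
derivatives of `u` and of `η` cancel by symmetry of second derivatives (`mixed_partials_comm`),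
which leaves `Δv = -γ'(ψ) (ψ_y η_x - ψ_x η_y)`. The stream function relations give
`ψ_y η_x - ψ_x η_y = v (η_x² + η_y²)`.
-/

lemma differentiableAt_partial {f : ℝ × ℝ → ℝ} {p : ℝ × ℝ} (hf : ContDiffAt ℝ 2 f p)
    (a : ℝ × ℝ) : DifferentiableAt ℝ (fun q => fderiv ℝ f q a) p :=
  ((hf.fderiv_right (m := 1) (by norm_num)).differentiableAt (by norm_num)).clm_apply
    (differentiableAt_const a)

lemma fderiv_partial {f : ℝ × ℝ → ℝ} {p : ℝ × ℝ} (hf : ContDiffAt ℝ 2 f p) (a b : ℝ × ℝ) :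
    fderiv ℝ (fun q => fderiv ℝ f q a) p b = fderiv ℝ (fderiv ℝ f) p b a := by
  have h : DifferentiableAt ℝ (fderiv ℝ f) p :=
    (hf.fderiv_right (m := 1) (by norm_num)).differentiableAt (by norm_num)
  rw [fderiv_clm_apply h (differentiableAt_const a)]
  simp

lemma mixed_partials_comm {f : ℝ × ℝ → ℝ} {p : ℝ × ℝ} (hf : ContDiffAt ℝ 2 f p)
    (a b : ℝ × ℝ) :
    fderiv ℝ (fun q => fderiv ℝ f q a) p b = fderiv ℝ (fun q => fderiv ℝ f q b) p a := by
  rw [fderiv_partial hf, fderiv_partial hf]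
  exact hf.isSymmSndFDerivAt (by simp) b a

/-- The derivative in direction `b` of the vorticity term `-γ(ψ) ∂ₐη`. -/
lemma fderiv_vorticity_term {γ : ℝ → ℝ} (hγ : ContDiff ℝ 1 γ) {ψ η : ℝ × ℝ → ℝ} {p : ℝ × ℝ}
    (hψ : ContDiffAt ℝ 2 ψ p) (hη : ContDiffAt ℝ 2 η p) (a b : ℝ × ℝ) :
    fderiv ℝ (fun q => -γ (ψ q) * fderiv ℝ η q a) p b
      = -(deriv γ (ψ p) * fderiv ℝ ψ p b) * fderiv ℝ η p a
        - γ (ψ p) * fderiv ℝ (fun q => fderiv ℝ η q a) p b := by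
  have h1 : HasDerivAt γ (deriv γ (ψ p)) (ψ p) :=
    (hγ.differentiable (by norm_num) _).hasDerivAt
  have h2 := h1.comp_hasFDerivAt p (hψ.differentiableAt (by norm_num)).hasFDerivAt
  have h3 := h2.neg.mul (differentiableAt_partial hη a).hasFDerivAt
  have h4 : fderiv ℝ (fun q => -γ (ψ q) * fderiv ℝ η q a) p = _ := h3.fderiv
  rw [h4]
  simp
  ring


/-- Interior equation of Lemma 5.2: if on an open set `Ω ⊆ ℝ²` the velocity
components `u, v`, stream function `ψ`, and conformal height `η` satisfy
`ψ_x = uη_x − vη_y`, `ψ_y = uη_y + vη_x`, `u_x + v_y = −γ(ψ)η_x`,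
`u_y − v_x = −γ(ψ)η_y`, then `Δv + γ'(ψ)(η_x² + η_y²) v = 0` on `Ω`. -/
theorem vertical_velocity_elliptic_equation
    (Ω : Set (ℝ × ℝ)) (hΩ : IsOpen Ω)
    (γ : ℝ → ℝ) (hγ : ContDiff ℝ 1 γ)
    (u v ψ η : ℝ × ℝ → ℝ)
    (hu : ContDiffOn ℝ 2 u Ω) (hv : ContDiffOn ℝ 2 v Ω)
    (hψ : ContDiffOn ℝ 2 ψ Ω) (hη : ContDiffOn ℝ 2 η Ω)
    (hψx : ∀ p ∈ Ω, fderiv ℝ ψ p ((1:ℝ), (0:ℝ))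
        = u p * fderiv ℝ η p ((1:ℝ), (0:ℝ)) - v p * fderiv ℝ η p ((0:ℝ), (1:ℝ)))
    (hψy : ∀ p ∈ Ω, fderiv ℝ ψ p ((0:ℝ), (1:ℝ))
        = u p * fderiv ℝ η p ((0:ℝ), (1:ℝ)) + v p * fderiv ℝ η p ((1:ℝ), (0:ℝ)))
    (hdiv : ∀ p ∈ Ω, fderiv ℝ u p ((1:ℝ), (0:ℝ)) + fderiv ℝ v p ((0:ℝ), (1:ℝ))
        = -γ (ψ p) * fderiv ℝ η p ((1:ℝ), (0:ℝ)))
    (hcurl : ∀ p ∈ Ω, fderiv ℝ u p ((0:ℝ), (1:ℝ)) - fderiv ℝ v p ((1:ℝ), (0:ℝ))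
        = -γ (ψ p) * fderiv ℝ η p ((0:ℝ), (1:ℝ))) :
    ∀ p ∈ Ω,
      fderiv ℝ (fun q => fderiv ℝ v q ((1:ℝ), (0:ℝ))) p ((1:ℝ), (0:ℝ))
        + fderiv ℝ (fun q => fderiv ℝ v q ((0:ℝ), (1:ℝ))) p ((0:ℝ), (1:ℝ))
        + deriv γ (ψ p)
          * ((fderiv ℝ η p ((1:ℝ), (0:ℝ))) ^ 2 + (fderiv ℝ η p ((0:ℝ), (1:ℝ))) ^ 2)
          * v p = 0 := by
  intro p hp
  have hΩp : Ω ∈ nhds p := hΩ.mem_nhds hp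
  have hup := hu.contDiffAt hΩp
  have hvp := hv.contDiffAt hΩp
  have hψp := hψ.contDiffAt hΩp
  have hηp := hη.contDiffAt hΩp
  -- The two first-order equations hold near `p`, so they may be differentiated at `p`.
  have e1 := (Filter.eventuallyEq_of_mem hΩp hdiv).fderiv_eq (𝕜 := ℝ)
  have e2 := (Filter.eventuallyEq_of_mem hΩp hcurl).fderiv_eq (𝕜 := ℝ)
  have hdiv_y := DFunLike.congr_fun e1 ((0:ℝ), (1:ℝ))
  have hcurl_x := DFunLike.congr_fun e2 ((1:ℝ), (0:ℝ))
  rw [fderiv_vorticity_term hγ hψp hηp, fderiv_fun_add (differentiableAt_partial hup _)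
    (differentiableAt_partial hvp _), add_apply, hψy p hp] at hdiv_y
  rw [fderiv_vorticity_term hγ hψp hηp, fderiv_fun_sub (differentiableAt_partial hup _)
    (differentiableAt_partial hvp _), sub_apply, hψx p hp,
    mixed_partials_comm hup, mixed_partials_comm hηp] at hcurl_x
  linear_combination hdiv_y - hcurl_x
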